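/- arXiv:1905.04758 — 2 statements merged into one kernel-verified Lean document; each statement's English description precedes it below -/
import Mathlib

section
/- Suppose A has the binomial distribution with parameters n ≥ 1 and 0 < p < 1, i.e., ℙ[A = k] = C(n,k) p^k (1−p)^{n−k} for 0 ≤ k ≤ n. Then E[X²] < ∞ if and only if n²p² + n·p(1−p) < 1; for n ≥ 2 this condition is equivalent to p < (1/2)·√((5n − 4)/((n−1)²·n)) − 1/(2(n−1)), and for n = 1 it always holds. When the condition holds, Var(X) = n(p−1)p / ((np − 1)² (n²p² − n(p−1)p − 1)). -/
open MeasureTheory ProbabilityTheory ENNReal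

/-!
Independence turns `X =_d A * X + 1` into linear equations for the moments:
`E[X] = E[A] E[X] + 1` and `E[X²] = E[A²] E[X²] + (2 E[A] E[X] + 1)`. A finite solution of
`a = m * a + c` with `c ≠ 0` forces `m < 1` and equals `c / (1 - m)`, but such an equation does not
exclude `a = ∞`. Finiteness for `m < 1` comes from truncation: `A` is integer-valued, so
`min (A * X + 1) N ≤ A * min X N + 1`, and the truncated moments, which are finite, satisfy
`a ≤ m * a + c` and hence are at most `c / (1 - m)` uniformly in `N`. As `E[A] ≤ E[A²]`, the second
moment of `X` is finite exactly when `E[A²] < 1`. It remains to insert the moments `n p` and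
`n² p² + n p (1 - p)` of the binomial law.
-/

section LinearEquation

variable {a c m : ℝ≥0∞}

lemma le_div_one_sub_of_le_mul_add (ha : a ≠ ⊤) (hm : m < 1) (h : a ≤ m * a + c) :
    a ≤ c / (1 - m) := by
  have hm_ne : 1 - m ≠ 0 := (tsub_pos_of_lt hm).ne'
  rw [ENNReal.le_div_iff_mul_le (.inl hm_ne) (.inl (by finiteness)), mul_comm,
    ENNReal.sub_mul fun _ _ => ha, one_mul]
  exact tsub_le_iff_left.2 h

lemma lt_one_of_eq_mul_add (ha : a ≠ ⊤) (hc : c ≠ 0) (h : a = m * a + c) : m < 1 := by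
  by_contra! hm
  have hlt : a < a + c := ENNReal.lt_add_right ha hc
  refine hlt.not_ge ?_
  calc a + c = 1 * a + c := by rw [one_mul]
    _ ≤ m * a + c := by gcongr
    _ = a := h.symm

lemma eq_div_one_sub_of_eq_mul_add (ha : a ≠ ⊤) (hm : m < 1) (h : a = m * a + c) :
    a = c / (1 - m) := by
  have hma : m * a ≠ ⊤ := by finiteness
  rw [ENNReal.eq_div_iff (tsub_pos_of_lt hm).ne' (by finiteness), ENNReal.sub_mul fun _ _ => ha,
    one_mul]
  exact ENNReal.sub_eq_of_eq_add_rev hma h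

end LinearEquation

section IndependentProduct

variable {Ω : Type*} [MeasurableSpace Ω] {P : Measure Ω} [IsProbabilityMeasure P]
  {Y Z : Ω → ℝ≥0∞}

lemma lintegral_mul_add_one_of_indepFun (hY : AEMeasurable Y P) (hZ : AEMeasurable Z P)
    (hYZ : IndepFun Y Z P) :
    ∫⁻ ω, (Y ω * Z ω + 1) ∂P = (∫⁻ ω, Y ω ∂P) * (∫⁻ ω, Z ω ∂P) + 1 := by
  rw [lintegral_add_right _ measurable_const,
    lintegral_mul_eq_lintegral_mul_lintegral_of_indepFun'' hY hZ hYZ]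
  simp

lemma lintegral_mul_add_one_sq_of_indepFun (hY : AEMeasurable Y P) (hZ : AEMeasurable Z P)
    (hYZ : IndepFun Y Z P) :
    ∫⁻ ω, (Y ω * Z ω + 1) ^ 2 ∂P = (∫⁻ ω, Y ω ^ 2 ∂P) * (∫⁻ ω, Z ω ^ 2 ∂P) +
      (2 * ((∫⁻ ω, Y ω ∂P) * (∫⁻ ω, Z ω ∂P)) + 1) := by
  have hmul := lintegral_mul_eq_lintegral_mul_lintegral_of_indepFun'' hY hZ hYZ
  have hmul_sq := lintegral_mul_eq_lintegral_mul_lintegral_of_indepFun'' (hY.pow_const 2)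
    (hZ.pow_const 2) (hYZ.comp (measurable_id.pow_const 2) (measurable_id.pow_const 2))
  calc ∫⁻ ω, (Y ω * Z ω + 1) ^ 2 ∂P
      = ∫⁻ ω, (Y ω ^ 2 * Z ω ^ 2 + (2 * (Y ω * Z ω) + 1)) ∂P :=
        lintegral_congr fun ω => by ring
    _ = ∫⁻ ω, Y ω ^ 2 * Z ω ^ 2 ∂P + (2 * ∫⁻ ω, Y ω * Z ω ∂P + 1) := by
        rw [lintegral_add_left' (by fun_prop), lintegral_add_right _ measurable_const,
          lintegral_const_mul'' _ (by fun_prop), lintegral_one, measure_univ]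
    _ = _ := by rw [hmul, hmul_sq]

end IndependentProduct

section Truncation

variable {Ω : Type*} [MeasurableSpace Ω] {P : Measure Ω} {X : Ω → ℕ} {f : ℕ → ℝ≥0∞}

lemma min_mul_add_one_le (a x N : ℕ) : min (a * x + 1) N ≤ a * min x N + 1 := by
  rcases Nat.eq_zero_or_pos a with rfl | ha
  · simp
  · rw [← Nat.mul_min_mul_left]
    have hN : N ≤ a * N := Nat.le_mul_of_pos_left N ha
    omega

lemma lintegral_comp_eq_iSup_min (hX : AEMeasurable X P) (hf : Monotone f) :
    ∫⁻ ω, f (X ω) ∂P = ⨆ N, ∫⁻ ω, f (min (X ω) N) ∂P := by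
  have hsup : ∀ x, f x = ⨆ N, f (min x N) := fun x =>
    le_antisymm (le_iSup_of_le x (by rw [min_self])) (iSup_le fun N => hf (min_le_left x N))
  rw [← lintegral_iSup']
  · exact lintegral_congr fun ω => hsup (X ω)
  · exact fun N => (measurable_of_countable fun k => f (min k N)).comp_aemeasurable hX
  · exact .of_forall fun ω M N hMN => hf (min_le_min_left _ hMN)

lemma lintegral_comp_lt_top_of_min_le [IsFiniteMeasure P] {m c : ℝ≥0∞} (hX : AEMeasurable X P)
    (hf : Monotone f) (hf_top : ∀ k, f k ≠ ⊤) (hm : m < 1) (hc : c ≠ ⊤)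
    (h : ∀ N, ∫⁻ ω, f (min (X ω) N) ∂P ≤ m * ∫⁻ ω, f (min (X ω) N) ∂P + c) :
    ∫⁻ ω, f (X ω) ∂P < ⊤ := by
  have htrunc : ∀ N, ∫⁻ ω, f (min (X ω) N) ∂P ≠ ⊤ := fun N =>
    ((lintegral_mono fun ω => hf (min_le_right (X ω) N)).trans_lt
      (lintegral_const_lt_top (hf_top N))).ne
  have hm_ne : 1 - m ≠ 0 := (tsub_pos_of_lt hm).ne'
  rw [lintegral_comp_eq_iSup_min hX hf]
  exact (iSup_le fun N => le_div_one_sub_of_le_mul_add (htrunc N) hm (h N)).trans_lt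
    (ENNReal.div_lt_top hc hm_ne)

end Truncation

lemma lintegral_natCast_le_lintegral_sq {Ω : Type*} [MeasurableSpace Ω] (P : Measure Ω)
    (Y : Ω → ℕ) : ∫⁻ ω, (Y ω : ℝ≥0∞) ∂P ≤ ∫⁻ ω, (Y ω : ℝ≥0∞) ^ 2 ∂P :=
  lintegral_mono fun ω => show (Y ω : ℝ≥0∞) ≤ (Y ω : ℝ≥0∞) ^ 2 by
    exact_mod_cast Nat.le_self_pow two_ne_zero (Y ω)

/-- `X` is a perpetuity with coefficient `A`: a solution of the distributional fixed-point equation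
`X =_d A * X + 1` that is independent of `A`. -/
structure IsPerpetuity {Ω : Type*} [MeasurableSpace Ω] (A X : Ω → ℕ) (P : Measure Ω) : Prop where
  aemeasurable_coeff : AEMeasurable A P
  indepFun : IndepFun A X P
  identDistrib : IdentDistrib X (fun ω => A ω * X ω + 1) P P

namespace IsPerpetuity

variable {Ω : Type*} [MeasurableSpace Ω] {P : Measure Ω} {A X : Ω → ℕ}

lemma lintegral_comp (h : IsPerpetuity A X P) (f : ℕ → ℝ≥0∞) :
    ∫⁻ ω, f (X ω) ∂P = ∫⁻ ω, f (A ω * X ω + 1) ∂P :=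
  (h.identDistrib.comp (measurable_of_countable f)).lintegral_eq

lemma lintegral_comp_min_le (h : IsPerpetuity A X P) {f : ℕ → ℝ≥0∞} (hf : Monotone f) (N : ℕ) :
    ∫⁻ ω, f (min (X ω) N) ∂P ≤ ∫⁻ ω, f (A ω * min (X ω) N + 1) ∂P := by
  rw [h.lintegral_comp fun k => f (min k N)]
  exact lintegral_mono fun ω => hf (min_mul_add_one_le _ _ _)

variable [IsProbabilityMeasure P]

lemma lintegral_mul_comp_add_one (h : IsPerpetuity A X P) (g : ℕ → ℕ) :
    ∫⁻ ω, ((A ω * g (X ω) + 1 : ℕ) : ℝ≥0∞) ∂P =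
      (∫⁻ ω, (A ω : ℝ≥0∞) ∂P) * (∫⁻ ω, (g (X ω) : ℝ≥0∞) ∂P) + 1 := by
  have hcast := measurable_of_countable fun k : ℕ => (k : ℝ≥0∞)
  have hg := measurable_of_countable fun k : ℕ => (g k : ℝ≥0∞)
  push_cast
  exact lintegral_mul_add_one_of_indepFun (hcast.comp_aemeasurable h.aemeasurable_coeff)
    (hg.comp_aemeasurable h.identDistrib.aemeasurable_fst) (h.indepFun.comp hcast hg)

lemma lintegral_mul_comp_add_one_sq (h : IsPerpetuity A X P) (g : ℕ → ℕ) :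
    ∫⁻ ω, ((A ω * g (X ω) + 1 : ℕ) : ℝ≥0∞) ^ 2 ∂P =
      (∫⁻ ω, (A ω : ℝ≥0∞) ^ 2 ∂P) * (∫⁻ ω, (g (X ω) : ℝ≥0∞) ^ 2 ∂P) +
        (2 * ((∫⁻ ω, (A ω : ℝ≥0∞) ∂P) * (∫⁻ ω, (g (X ω) : ℝ≥0∞) ∂P)) + 1) := by
  have hcast := measurable_of_countable fun k : ℕ => (k : ℝ≥0∞)
  have hg := measurable_of_countable fun k : ℕ => (g k : ℝ≥0∞)
  push_cast
  exact lintegral_mul_add_one_sq_of_indepFun (hcast.comp_aemeasurable h.aemeasurable_coeff)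
    (hg.comp_aemeasurable h.identDistrib.aemeasurable_fst) (h.indepFun.comp hcast hg)

lemma lintegral_eq_mul_add (h : IsPerpetuity A X P) :
    ∫⁻ ω, (X ω : ℝ≥0∞) ∂P = (∫⁻ ω, (A ω : ℝ≥0∞) ∂P) * (∫⁻ ω, (X ω : ℝ≥0∞) ∂P) + 1 :=
  (h.lintegral_comp (↑)).trans (h.lintegral_mul_comp_add_one id)

lemma lintegral_sq_eq_mul_add (h : IsPerpetuity A X P) :
    ∫⁻ ω, (X ω : ℝ≥0∞) ^ 2 ∂P = (∫⁻ ω, (A ω : ℝ≥0∞) ^ 2 ∂P) * (∫⁻ ω, (X ω : ℝ≥0∞) ^ 2 ∂P) +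
      (2 * ((∫⁻ ω, (A ω : ℝ≥0∞) ∂P) * (∫⁻ ω, (X ω : ℝ≥0∞) ∂P)) + 1) :=
  (h.lintegral_comp fun k => (k : ℝ≥0∞) ^ 2).trans (h.lintegral_mul_comp_add_one_sq id)

lemma lintegral_lt_top (h : IsPerpetuity A X P) (hA : ∫⁻ ω, (A ω : ℝ≥0∞) ∂P < 1) :
    ∫⁻ ω, (X ω : ℝ≥0∞) ∂P < ⊤ := by
  have hcast : Monotone fun k : ℕ => (k : ℝ≥0∞) := Nat.mono_cast
  refine lintegral_comp_lt_top_of_min_le h.identDistrib.aemeasurable_fst hcast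
    ENNReal.natCast_ne_top hA one_ne_top fun N => ?_
  exact (h.lintegral_comp_min_le hcast N).trans_eq (h.lintegral_mul_comp_add_one (min · N))

lemma lintegral_sq_lt_top (h : IsPerpetuity A X P) (hA : ∫⁻ ω, (A ω : ℝ≥0∞) ^ 2 ∂P < 1) :
    ∫⁻ ω, (X ω : ℝ≥0∞) ^ 2 ∂P < ⊤ := by
  have hA1 : ∫⁻ ω, (A ω : ℝ≥0∞) ∂P < 1 := (lintegral_natCast_le_lintegral_sq P A).trans_lt hA
  have hX1 : ∫⁻ ω, (X ω : ℝ≥0∞) ∂P < ⊤ := h.lintegral_lt_top hA1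
  have hsq : Monotone fun k : ℕ => (k : ℝ≥0∞) ^ 2 := fun k l hkl => by dsimp only; gcongr
  refine lintegral_comp_lt_top_of_min_le
    (c := 2 * ((∫⁻ ω, (A ω : ℝ≥0∞) ∂P) * ∫⁻ ω, (X ω : ℝ≥0∞) ∂P) + 1)
    h.identDistrib.aemeasurable_fst hsq (fun k => by finiteness) hA (by finiteness) fun N => ?_
  refine (h.lintegral_comp_min_le hsq N).trans
    ((h.lintegral_mul_comp_add_one_sq (min · N)).trans_le ?_)
  gcongr
  exact min_le_left _ _

theorem lintegral_sq_lt_top_iff (h : IsPerpetuity A X P) :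
    ∫⁻ ω, (X ω : ℝ≥0∞) ^ 2 ∂P < ⊤ ↔ ∫⁻ ω, (A ω : ℝ≥0∞) ^ 2 ∂P < 1 :=
  ⟨fun hX => lt_one_of_eq_mul_add hX.ne (by simp) h.lintegral_sq_eq_mul_add,
    h.lintegral_sq_lt_top⟩

lemma toReal_lintegral (h : IsPerpetuity A X P) (hA : ∫⁻ ω, (A ω : ℝ≥0∞) ∂P < 1) :
    (∫⁻ ω, (X ω : ℝ≥0∞) ∂P).toReal = 1 / (1 - (∫⁻ ω, (A ω : ℝ≥0∞) ∂P).toReal) := by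
  rw [eq_div_one_sub_of_eq_mul_add (h.lintegral_lt_top hA).ne hA h.lintegral_eq_mul_add,
    toReal_div, toReal_sub_of_le hA.le one_ne_top, toReal_one]

lemma toReal_lintegral_sq (h : IsPerpetuity A X P) (hA : ∫⁻ ω, (A ω : ℝ≥0∞) ^ 2 ∂P < 1) :
    (∫⁻ ω, (X ω : ℝ≥0∞) ^ 2 ∂P).toReal =
      (2 * ((∫⁻ ω, (A ω : ℝ≥0∞) ∂P).toReal * (∫⁻ ω, (X ω : ℝ≥0∞) ∂P).toReal) + 1) /
        (1 - (∫⁻ ω, (A ω : ℝ≥0∞) ^ 2 ∂P).toReal) := by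
  have hA1 : ∫⁻ ω, (A ω : ℝ≥0∞) ∂P < 1 := (lintegral_natCast_le_lintegral_sq P A).trans_lt hA
  have hX1 : ∫⁻ ω, (X ω : ℝ≥0∞) ∂P < ⊤ := h.lintegral_lt_top hA1
  rw [eq_div_one_sub_of_eq_mul_add (h.lintegral_sq_lt_top hA).ne hA h.lintegral_sq_eq_mul_add,
    toReal_div, toReal_sub_of_le hA.le one_ne_top, toReal_add (by finiteness) one_ne_top,
    toReal_mul, toReal_mul, toReal_one, toReal_ofNat]

theorem lintegral_sq_sub_sq_lintegral (h : IsPerpetuity A X P)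
    (hA : ∫⁻ ω, (A ω : ℝ≥0∞) ^ 2 ∂P < 1) :
    (∫⁻ ω, (X ω : ℝ≥0∞) ^ 2 ∂P) - (∫⁻ ω, (X ω : ℝ≥0∞) ∂P) ^ 2 =
      ENNReal.ofReal
        (((∫⁻ ω, (A ω : ℝ≥0∞) ^ 2 ∂P).toReal - (∫⁻ ω, (A ω : ℝ≥0∞) ∂P).toReal ^ 2) /
          ((1 - (∫⁻ ω, (A ω : ℝ≥0∞) ∂P).toReal) ^ 2 *
            (1 - (∫⁻ ω, (A ω : ℝ≥0∞) ^ 2 ∂P).toReal))) := by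
  have hA1 : ∫⁻ ω, (A ω : ℝ≥0∞) ∂P < 1 := (lintegral_natCast_le_lintegral_sq P A).trans_lt hA
  have hX1 : ∫⁻ ω, (X ω : ℝ≥0∞) ∂P < ⊤ := h.lintegral_lt_top hA1
  have hA1_ne : 1 - (∫⁻ ω, (A ω : ℝ≥0∞) ∂P).toReal ≠ 0 :=
    (sub_pos.2 (toReal_lt_of_lt_ofReal (by simpa using hA1))).ne'
  have hA2_ne : 1 - (∫⁻ ω, (A ω : ℝ≥0∞) ^ 2 ∂P).toReal ≠ 0 :=
    (sub_pos.2 (toReal_lt_of_lt_ofReal (by simpa using hA))).ne'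
  rw [← ofReal_toReal (h.lintegral_sq_lt_top hA).ne, ← ofReal_toReal hX1.ne,
    ← ofReal_pow toReal_nonneg, ← ofReal_sub _ (by positivity), h.toReal_lintegral_sq hA,
    h.toReal_lintegral hA1]
  congr 1
  field_simp
  ring

end IsPerpetuity

section Binomial

variable {n : ℕ} {p : unitInterval}

lemma eq_of_forall_singleton_le {α : Type*} [MeasurableSpace α] [Countable α]
    [MeasurableSingletonClass α] {μ ν : Measure α} [IsProbabilityMeasure μ]
    [IsProbabilityMeasure ν] (h : ∀ a, μ {a} ≤ ν {a}) : μ = ν := by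
  refine Measure.eq_of_le_of_measure_univ_eq (Measure.le_iff.2 fun s hs => ?_) (by simp)
  rw [← Measure.tsum_indicator_apply_singleton μ s hs,
    ← Measure.tsum_indicator_apply_singleton ν s hs]
  exact ENNReal.tsum_le_tsum fun a => Set.indicator_le_indicator (h a)

lemma hasLaw_binomial_of_forall_le {Ω : Type*} [MeasurableSpace Ω] {P : Measure Ω}
    [IsProbabilityMeasure P] {A : Ω → ℕ} (hA : AEMeasurable A P)
    (h : ∀ k ≤ n, P {ω | A ω = k} =
      ENNReal.ofReal ((n.choose k : ℝ) * (p : ℝ) ^ k * (1 - p) ^ (n - k))) :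
    HasLaw A (binomial n p) P := by
  have := Measure.isProbabilityMeasure_map hA
  refine ⟨hA, (eq_of_forall_singleton_le fun k => ?_).symm⟩
  rw [Measure.map_apply_of_aemeasurable hA (measurableSet_singleton k), binomial_singleton]
  rcases le_or_gt k n with hk | hk
  · exact (h k hk).ge
  · simp [Nat.choose_eq_zero_of_lt hk]

lemma integral_binomial_eq_sum_bernstein (f : ℕ → ℝ) :
    ∫ k, f k ∂binomial n p =
      ∑ k ∈ Finset.range (n + 1), f k * (bernsteinPolynomial ℝ n k).eval (p : ℝ) := by
  rw [integral_binomial, Nat.range_succ_eq_Iic]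
  exact Finset.sum_congr rfl fun k _ => by simp [bernsteinPolynomial, mul_comm]

lemma integral_natCast_binomial : ∫ k, (k : ℝ) ∂binomial n p = n * p := by
  rw [integral_binomial_eq_sum_bernstein]
  simpa [Polynomial.eval_finsetSum] using
    congrArg (Polynomial.eval (p : ℝ)) (bernsteinPolynomial.sum_smul ℝ n)

lemma integral_natCast_sq_binomial :
    ∫ k, (k : ℝ) ^ 2 ∂binomial n p = (n : ℝ) ^ 2 * (p : ℝ) ^ 2 + n * p * (1 - p) := by
  have cast_mul_pred (k : ℕ) : ((k * (k - 1) : ℕ) : ℝ) = (k : ℝ) ^ 2 - k := by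
    cases k <;> simp; ring
  have hfactorial : ∫ k, ((k : ℝ) ^ 2 - k) ∂binomial n p = ((n : ℝ) ^ 2 - n) * (p : ℝ) ^ 2 := by
    rw [integral_binomial_eq_sum_bernstein]
    simpa only [Polynomial.eval_finsetSum, Polynomial.eval_mul, Polynomial.eval_pow,
      Polynomial.eval_X, Polynomial.eval_natCast, nsmul_eq_mul, cast_mul_pred] using
      congrArg (Polynomial.eval (p : ℝ)) (bernsteinPolynomial.sum_mul_smul ℝ n)
  rw [integral_sub (integrable_binomial _) (integrable_binomial _), integral_natCast_binomial]
    at hfactorial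
  linear_combination hfactorial

lemma lintegral_natCast_pow_of_hasLaw_binomial {Ω : Type*} [MeasurableSpace Ω] {P : Measure Ω}
    {A : Ω → ℕ} (hA : HasLaw A (binomial n p) P) (r : ℕ) :
    ∫⁻ ω, (A ω : ℝ≥0∞) ^ r ∂P = ENNReal.ofReal (∫ k, (k : ℝ) ^ r ∂binomial n p) := by
  rw [ofReal_integral_eq_lintegral_ofReal (integrable_binomial _)
    (.of_forall fun k => by positivity), ← hA.lintegral_comp (by fun_prop)]
  simp [ofReal_pow]

end Binomial

lemma sq_mul_sq_add_lt_one_iff_lt_sqrt {x p : ℝ} (hx : 1 < x) (hp : 0 ≤ p) :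
    x ^ 2 * p ^ 2 + x * p * (1 - p) < 1 ↔
      p < (1 / 2) * √((5 * x - 4) / ((x - 1) ^ 2 * x)) - 1 / (2 * (x - 1)) := by
  have hx1 : 0 < x - 1 := sub_pos.2 hx
  have complete_square : (2 * p + 1 / (x - 1)) ^ 2 * ((x - 1) ^ 2 * x) - (5 * x - 4) =
      4 * (x - 1) * (x ^ 2 * p ^ 2 + x * p * (1 - p) - 1) := by
    field_simp
    ring
  calc x ^ 2 * p ^ 2 + x * p * (1 - p) < 1
      ↔ 4 * (x - 1) * (x ^ 2 * p ^ 2 + x * p * (1 - p) - 1) < 0 := by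
        rw [← sub_neg, ← mul_lt_mul_iff_of_pos_left (show 0 < 4 * (x - 1) by positivity), mul_zero]
    _ ↔ (2 * p + 1 / (x - 1)) ^ 2 < (5 * x - 4) / ((x - 1) ^ 2 * x) := by
        rw [← complete_square, sub_neg, lt_div_iff₀ (by positivity)]
    _ ↔ 2 * p + 1 / (x - 1) < √((5 * x - 4) / ((x - 1) ^ 2 * x)) :=
        (Real.lt_sqrt (by positivity)).symm
    _ ↔ p < (1 / 2) * √((5 * x - 4) / ((x - 1) ^ 2 * x)) - 1 / (2 * (x - 1)) := by
        rw [← one_div_mul_one_div 2 (x - 1)]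
        constructor <;> intro h <;> linarith

theorem stmt_7 {Ω : Type*} [MeasurableSpace Ω] {P : Measure Ω} [IsProbabilityMeasure P]
    {A X : Ω → ℕ} (hA : Measurable A) (hX : Measurable X)
    (hAX : IndepFun A X P)
    (h0 : 0 < P {ω | A ω = 0})
    (hfix : Measure.map X P = Measure.map (fun ω => A ω * X ω + 1) P)
    (n : ℕ) (hn : 1 ≤ n) (p : ℝ) (hp0 : 0 < p) (hp1 : p < 1)
    (hbin : ∀ k : ℕ, k ≤ n → P {ω | A ω = k} =
      ENNReal.ofReal ((n.choose k : ℝ) * p ^ k * (1 - p) ^ (n - k))) :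
    ((∫⁻ ω, (X ω : ℝ≥0∞) ^ 2 ∂P) < ⊤ ↔ (n : ℝ) ^ 2 * p ^ 2 + n * p * (1 - p) < 1) ∧
    (2 ≤ n → ((n : ℝ) ^ 2 * p ^ 2 + n * p * (1 - p) < 1 ↔
      p < (1 / 2) * Real.sqrt ((5 * n - 4) / (((n : ℝ) - 1) ^ 2 * n)) - 1 / (2 * ((n : ℝ) - 1)))) ∧
    (n = 1 → (n : ℝ) ^ 2 * p ^ 2 + n * p * (1 - p) < 1) ∧
    ((n : ℝ) ^ 2 * p ^ 2 + n * p * (1 - p) < 1 →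
      (∫⁻ ω, (X ω : ℝ≥0∞) ^ 2 ∂P) - (∫⁻ ω, (X ω : ℝ≥0∞) ∂P) ^ 2 =
        ENNReal.ofReal ((n : ℝ) * (p - 1) * p /
          (((n : ℝ) * p - 1) ^ 2 * ((n : ℝ) ^ 2 * p ^ 2 - n * (p - 1) * p - 1)))) := by
  lift p to unitInterval using ⟨hp0.le, hp1.le⟩
  have hperp : IsPerpetuity A X P :=
    ⟨hA.aemeasurable, hAX, hX.aemeasurable, by fun_prop, hfix⟩
  have hlaw : HasLaw A (binomial n p) P := hasLaw_binomial_of_forall_le hA.aemeasurable hbin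
  have hA1 : ∫⁻ ω, (A ω : ℝ≥0∞) ∂P = ENNReal.ofReal (n * p) := by
    simpa only [pow_one, integral_natCast_binomial] using
      lintegral_natCast_pow_of_hasLaw_binomial hlaw 1
  have hA2 : ∫⁻ ω, (A ω : ℝ≥0∞) ^ 2 ∂P =
      ENNReal.ofReal ((n : ℝ) ^ 2 * (p : ℝ) ^ 2 + n * p * (1 - p)) := by
    rw [lintegral_natCast_pow_of_hasLaw_binomial hlaw, integral_natCast_sq_binomial]
  refine ⟨?_, fun hn2 => ?_, ?_, fun hlt => ?_⟩
  · rw [hperp.lintegral_sq_lt_top_iff, hA2, ofReal_lt_one]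
  · exact sq_mul_sq_add_lt_one_iff_lt_sqrt (by exact_mod_cast hn2) hp0.le
  · rintro rfl
    linarith [show ((1 : ℕ) : ℝ) ^ 2 * (p : ℝ) ^ 2 + (1 : ℕ) * p * (1 - p) = p by push_cast; ring]
  · rw [hperp.lintegral_sq_sub_sq_lintegral (hA2.trans_lt (ofReal_lt_one.2 hlt)), hA1, hA2,
      toReal_ofReal (by positivity), toReal_ofReal (by positivity)]
    congr 1
    rw [← neg_div_neg_eq]
    congr 1 <;> ring
end

section
/- Suppose A has the negative binomial distribution with parameters r ≥ 1 (an integer) and 0 < p < 1, i.e., ℙ[A = k] = C(k + r − 1, k) p^r (1−p)^k for k ∈ ℕ (so E[A] = r(1−p)/p). Then E[X] < ∞ if and only if p > r/(1 + r), and in that case E[X] = p / (p·r + p − r). -/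
open MeasureTheory ProbabilityTheory ENNReal

/-!
Independence turns the fixed-point equation `X =_d A * X + B` into `E[X] = E[A] * E[X] + E[B]`,
which forces `E[X] ≥ E[B] / (1 - E[A])` but leaves `E[X] = ∞` possible. If `A` never takes a value
in `(0, 1)`, then `min (A * X + B) n ≤ A * min X n + B`, so the finite truncated means satisfy
`E[min X n] ≤ E[A] * E[min X n] + E[B]`, whence `E[min X n] ≤ E[B] / (1 - E[A])`, and monotone
convergence gives the matching upper bound. In `[0, ∞]`, for `E[B] > 0`, the identity
`E[X] = E[B] / (1 - E[A])` also covers `E[A] ≥ 1`, where the truncated subtraction is `0` and the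
quotient is `∞`.
-/

section ExtendedReals

variable {a b m t x : ℝ≥0∞}

theorem div_one_sub_le_of_mul_add_le (h : m * x + b ≤ x) : b / (1 - m) ≤ x := by
  by_cases hx : x = ∞
  · exact hx ▸ le_top
  have hmx : m * x ≠ ∞ := ne_top_of_le_ne_top hx (le_self_add.trans h)
  apply ENNReal.div_le_of_le_mul
  rw [ENNReal.mul_sub fun _ _ => hx, mul_one, mul_comm x m]
  exact ENNReal.le_sub_of_add_le_left hmx h

theorem le_div_one_sub_of_le_mul_add_s8 (hx : x ≠ ∞) (hb : b ≠ 0) (h : x ≤ m * x + b) :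
    x ≤ b / (1 - m) := by
  rw [ENNReal.le_div_iff_mul_le (.inr hb) (.inl (sub_ne_top one_ne_top)),
    ENNReal.mul_sub fun _ _ => hx, mul_one, mul_comm x m]
  exact tsub_le_iff_left.2 h

theorem min_mul_add_le (ha : a = 0 ∨ 1 ≤ a) : min (a * x + b) t ≤ a * min x t + b := by
  rcases ha with rfl | ha
  · simp
  · rcases le_total x t with hxt | htx
    · rw [min_eq_left hxt]
      exact min_le_left _ _
    · rw [min_eq_right htx]
      exact (min_le_right _ _).trans ((le_mul_of_one_le_left' ha).trans le_self_add)

end ExtendedReals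

section FixedPoint

variable {Ω : Type*} [MeasurableSpace Ω] {P : Measure Ω} {A B X : Ω → ℝ≥0∞}

theorem lintegral_eq_iSup_lintegral_min_natCast (hX : AEMeasurable X P) :
    ∫⁻ ω, X ω ∂P = ⨆ n : ℕ, ∫⁻ ω, min (X ω) n ∂P := by
  rw [← lintegral_iSup' (fun n => hX.min aemeasurable_const)
    (.of_forall fun ω m n hmn => min_le_min_left _ (Nat.cast_le.2 hmn))]
  refine lintegral_congr fun ω => ?_
  rw [← inf_iSup_eq, iSup_natCast, inf_top_eq]

theorem lintegral_mul_add_of_indepFun (hA : AEMeasurable A P) (hX : AEMeasurable X P)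
    (hAX : IndepFun A X P) :
    ∫⁻ ω, (A ω * X ω + B ω) ∂P = (∫⁻ ω, A ω ∂P) * ∫⁻ ω, X ω ∂P + ∫⁻ ω, B ω ∂P := by
  rw [lintegral_add_left' (hA.fun_mul hX),
    lintegral_mul_eq_lintegral_mul_lintegral_of_indepFun'' hA hX hAX]

theorem lintegral_min_le_of_identDistrib_mul_add (hA : AEMeasurable A P) (hAX : IndepFun A X P)
    (hA01 : ∀ᵐ ω ∂P, A ω = 0 ∨ 1 ≤ A ω)
    (hfix : IdentDistrib X (fun ω => A ω * X ω + B ω) P P) (t : ℝ≥0∞) :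
    ∫⁻ ω, min (X ω) t ∂P ≤ (∫⁻ ω, A ω ∂P) * ∫⁻ ω, min (X ω) t ∂P + ∫⁻ ω, B ω ∂P := by
  have hmin : Measurable fun x : ℝ≥0∞ => min x t := by fun_prop
  calc ∫⁻ ω, min (X ω) t ∂P
      = ∫⁻ ω, min (A ω * X ω + B ω) t ∂P := (hfix.comp hmin).lintegral_eq
    _ ≤ ∫⁻ ω, (A ω * min (X ω) t + B ω) ∂P :=
        lintegral_mono_ae (hA01.mono fun _ => min_mul_add_le)
    _ = (∫⁻ ω, A ω ∂P) * ∫⁻ ω, min (X ω) t ∂P + ∫⁻ ω, B ω ∂P :=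
        lintegral_mul_add_of_indepFun hA (hmin.comp_aemeasurable hfix.aemeasurable_fst)
          (hAX.comp measurable_id hmin)

theorem lintegral_eq_div_one_sub_of_identDistrib_mul_add [IsFiniteMeasure P]
    (hA : AEMeasurable A P) (hAX : IndepFun A X P) (hA01 : ∀ᵐ ω ∂P, A ω = 0 ∨ 1 ≤ A ω)
    (hB : ∫⁻ ω, B ω ∂P ≠ 0) (hfix : IdentDistrib X (fun ω => A ω * X ω + B ω) P P) :
    ∫⁻ ω, X ω ∂P = (∫⁻ ω, B ω ∂P) / (1 - ∫⁻ ω, A ω ∂P) := by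
  have hX : AEMeasurable X P := hfix.aemeasurable_fst
  apply le_antisymm
  · rw [lintegral_eq_iSup_lintegral_min_natCast hX]
    refine iSup_le fun n => le_div_one_sub_of_le_mul_add_s8 ?_ hB
      (lintegral_min_le_of_identDistrib_mul_add hA hAX hA01 hfix n)
    exact ((lintegral_mono fun _ => min_le_right _ _).trans_lt
      (lintegral_const_lt_top (natCast_ne_top n))).ne
  · refine div_one_sub_le_of_mul_add_le ?_
    rw [← lintegral_mul_add_of_indepFun hA hX hAX]
    exact hfix.lintegral_eq.ge

theorem lintegral_natCast_eq_inv_one_sub_of_map_eq [IsProbabilityMeasure P] {A X : Ω → ℕ}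
    (hA : Measurable A) (hX : Measurable X) (hAX : IndepFun A X P)
    (hfix : P.map X = P.map fun ω => A ω * X ω + 1) :
    ∫⁻ ω, (X ω : ℝ≥0∞) ∂P = (1 - ∫⁻ ω, (A ω : ℝ≥0∞) ∂P)⁻¹ := by
  have hcast : Measurable (Nat.cast : ℕ → ℝ≥0∞) := .of_discrete
  have hfixℕ : IdentDistrib X (fun ω => A ω * X ω + 1) P P :=
    ⟨hX.aemeasurable, ((hA.mul hX).add_const 1).aemeasurable, hfix⟩
  have hfix' : IdentDistrib (fun ω => (X ω : ℝ≥0∞)) (fun ω => A ω * X ω + 1) P P := by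
    simpa [Function.comp_def] using hfixℕ.comp hcast
  have hA01 (ω : Ω) : (A ω : ℝ≥0∞) = 0 ∨ 1 ≤ (A ω : ℝ≥0∞) := by
    exact_mod_cast Nat.eq_zero_or_pos (A ω)
  simpa using lintegral_eq_div_one_sub_of_identDistrib_mul_add (hcast.comp hA).aemeasurable
    (hAX.comp hcast hcast) (.of_forall hA01) (by simp) hfix'

end FixedPoint

section NegativeBinomial

theorem succ_mul_choose_add_eq (r k : ℕ) :
    (k + 1) * (k + r).choose (k + 1) = r * (k + r).choose r := by
  have h := Nat.choose_succ_right_eq (k + r) k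
  rw [Nat.add_sub_cancel_left, Nat.choose_symm_add] at h
  linarith

theorem hasSum_mul_choose_mul_geometric {𝕜 : Type*} [NormedDivisionRing 𝕜] (r : ℕ) {q : 𝕜}
    (hq : ‖q‖ < 1) :
    HasSum (fun k : ℕ => (k : 𝕜) * ((k + r - 1).choose k * q ^ k)) (r * q / (1 - q) ^ (r + 1)) := by
  have hshift (k : ℕ) : ((k + 1 : ℕ) : 𝕜) * ((k + 1 + r - 1).choose (k + 1) * q ^ (k + 1)) =
      r * q * ((k + r).choose r * q ^ k) := by
    have hchoose : ((k + 1 : ℕ) : 𝕜) * (k + r).choose (k + 1) = r * (k + r).choose r := by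
      rw [← Nat.cast_mul, succ_mul_choose_add_eq, Nat.cast_mul]
    rw [show k + 1 + r - 1 = k + r by lia, ← mul_assoc, hchoose, pow_succ', mul_assoc, mul_assoc,
      ← mul_assoc q, ← Nat.cast_comm, mul_assoc]
  rw [← hasSum_nat_add_iff' 1]
  simp only [hshift]
  simpa [div_eq_mul_inv] using
    (hasSum_choose_mul_geometric_of_norm_lt_one r hq).mul_left (r * q)

/-- The probability mass function `k ↦ C(k + r - 1, k) p ^ r (1 - p) ^ k` of the negative binomial
distribution, the number of failures before the `r`-th success in Bernoulli trials of success
probability `p`. For `r = 0` the truncated subtraction makes it the point mass at `0`. -/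
noncomputable def negBinomialPMFReal (r : ℕ) (p : ℝ) (k : ℕ) : ℝ :=
  (k + r - 1).choose k * p ^ r * (1 - p) ^ k

variable {p : ℝ}

theorem negBinomialPMFReal_nonneg (r : ℕ) (hp0 : 0 ≤ p) (hp1 : p ≤ 1) (k : ℕ) :
    0 ≤ negBinomialPMFReal r p k :=
  mul_nonneg (mul_nonneg (Nat.cast_nonneg _) (pow_nonneg hp0 r)) (pow_nonneg (sub_nonneg.2 hp1) k)

theorem hasSum_mul_negBinomialPMFReal (r : ℕ) (hp0 : 0 < p) (hp1 : p ≤ 1) :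
    HasSum (fun k : ℕ => k * negBinomialPMFReal r p k) (r * (1 - p) / p) := by
  have hq : ‖1 - p‖ < 1 := by
    rw [Real.norm_of_nonneg (sub_nonneg.2 hp1)]
    linarith
  convert! (hasSum_mul_choose_mul_geometric r hq).mul_left (p ^ r) using 1
  · funext k
    simp only [negBinomialPMFReal]
    ring
  · rw [_root_.sub_sub_cancel]
    field_simp
    ring

variable {Ω : Type*} [MeasurableSpace Ω] {P : Measure Ω} {A : Ω → ℕ}

theorem lintegral_natCast_eq_tsum (hA : Measurable A) :
    ∫⁻ ω, (A ω : ℝ≥0∞) ∂P = ∑' k : ℕ, (k : ℝ≥0∞) * P {ω | A ω = k} := by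
  rw [← lintegral_map (f := fun k : ℕ => (k : ℝ≥0∞)) .of_discrete hA, lintegral_countable']
  simp only [Measure.map_apply hA (measurableSet_singleton _)]
  rfl

theorem lintegral_natCast_of_negBinomial {r : ℕ} (hA : Measurable A) (hp0 : 0 < p) (hp1 : p ≤ 1)
    (hnb : ∀ k : ℕ, P {ω | A ω = k} = ENNReal.ofReal (negBinomialPMFReal r p k)) :
    ∫⁻ ω, (A ω : ℝ≥0∞) ∂P = ENNReal.ofReal (r * (1 - p) / p) := by
  have hsum := hasSum_mul_negBinomialPMFReal r hp0 hp1
  have hnonneg := negBinomialPMFReal_nonneg r hp0.le hp1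
  rw [lintegral_natCast_eq_tsum hA, ← hsum.tsum_eq,
    ofReal_tsum_of_nonneg (fun k => mul_nonneg k.cast_nonneg (hnonneg k)) hsum.summable]
  refine tsum_congr fun k => ?_
  rw [hnb, ofReal_mul k.cast_nonneg, ofReal_natCast]

end NegativeBinomial

theorem stmt_8 {Ω : Type*} [MeasurableSpace Ω] {P : Measure Ω} [IsProbabilityMeasure P]
    {A X : Ω → ℕ} (hA : Measurable A) (hX : Measurable X)
    (hAX : IndepFun A X P)
    (h0 : 0 < P {ω | A ω = 0})
    (hfix : Measure.map X P = Measure.map (fun ω => A ω * X ω + 1) P)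
    (r : ℕ) (hr : 1 ≤ r) (p : ℝ) (hp0 : 0 < p) (hp1 : p < 1)
    (hnb : ∀ k : ℕ, P {ω | A ω = k} =
      ENNReal.ofReal (((k + r - 1).choose k : ℝ) * p ^ r * (1 - p) ^ k)) :
    ((∫⁻ ω, (X ω : ℝ≥0∞) ∂P) < ⊤ ↔ (r : ℝ) / (1 + r) < p) ∧
    ((r : ℝ) / (1 + r) < p →
      ∫⁻ ω, (X ω : ℝ≥0∞) ∂P = ENNReal.ofReal (p / (p * r + p - r))) := by
  have hmeanA_nonneg : 0 ≤ r * (1 - p) / p :=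
    div_nonneg (mul_nonneg r.cast_nonneg (sub_nonneg.2 hp1.le)) hp0.le
  have hgap : 1 - r * (1 - p) / p = (p * r + p - r) / p := by
    field_simp
    ring
  have hmeanX : ∫⁻ ω, (X ω : ℝ≥0∞) ∂P = (ENNReal.ofReal ((p * r + p - r) / p))⁻¹ := by
    rw [lintegral_natCast_eq_inv_one_sub_of_map_eq hA hX hAX hfix,
      lintegral_natCast_of_negBinomial hA hp0 hp1.le hnb, ← ofReal_one,
      ← ofReal_sub 1 hmeanA_nonneg, hgap]
  have hcrit : (r : ℝ) / (1 + r) < p ↔ 0 < (p * r + p - r) / p := by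
    rw [div_lt_iff₀ (by positivity), div_pos_iff_of_pos_right hp0]
    constructor <;> intro h <;> linarith
  rw [hmeanX, hcrit, ENNReal.inv_lt_top, ofReal_pos]
  refine ⟨Iff.rfl, fun hpos => ?_⟩
  rw [← ofReal_inv_of_pos hpos, inv_div]
end
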